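/- Let π_θ, θ ∈ ℝ^d, be a family of policies on a finite MDP such that for each (s,a) the map θ ↦ π_θ(a|s) is differentiable at θ₀ and π_{θ₀}(a|s) > 0 for all (s,a). Then the map θ ↦ η(π_θ) is differentiable at θ₀ and its gradient is ∇_θ η(π_θ)|_{θ=θ₀} = (1/(1−γ)) · ∑_{s∈S} d^{π_{θ₀}}(s) ∑_{a∈A} π_{θ₀}(a|s) · ∇_θ log π_θ(a|s)|_{θ=θ₀} · Q^{π_{θ₀}}(s,a). -/

import Mathlib

open scoped BigOperators

namespace PolicyOpt

/-- A finite Markov decision process. -/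
structure MDP (S A : Type*) [Fintype S] [Fintype A] where
  p : S → A → S → ℝ
  r : S → A → ℝ
  γ : ℝ
  μ0 : S → ℝ
  p_nonneg : ∀ s a s', 0 ≤ p s a s'
  p_sum_one : ∀ s a, ∑ s', p s a s' = 1
  μ0_nonneg : ∀ s, 0 ≤ μ0 s
  μ0_sum_one : ∑ s, μ0 s = 1
  γ_pos : 0 < γ
  γ_lt_one : γ < 1

variable {S A : Type*} [Fintype S] [Fintype A] [DecidableEq S] [DecidableEq A]

set_option linter.unusedSectionVars false

/-- A policy assigns to every state a probability distribution over actions. -/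
def IsPolicy (π : S → A → ℝ) : Prop :=
  (∀ s a, 0 ≤ π s a) ∧ ∀ s, ∑ a, π s a = 1

/-- Trajectory prefixes (histories) consisting of `t+1` state-action pairs. -/
abbrev Hist (S A : Type*) (t : ℕ) := Fin (t + 1) → S × A

/-- Probability of a history of length `t+1` when following policy `π`
starting from the initial distribution `μ0`. -/
noncomputable def prob (M : MDP S A) (π : S → A → ℝ) (t : ℕ) (h : Hist S A t) : ℝ :=
  (M.μ0 (h 0).1 * π (h 0).1 (h 0).2) *
    ∏ i : Fin t,
      (M.p (h i.castSucc).1 (h i.castSucc).2 (h i.succ).1 * π (h i.succ).1 (h i.succ).2)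

/-- Probability of a history of length `t+1` when following policy `π`,
conditioned on starting in state `s` with first action `a`. -/
noncomputable def probFrom (M : MDP S A) (π : S → A → ℝ) (s : S) (a : A) (t : ℕ) (h : Hist S A t) : ℝ :=
  (if h 0 = (s, a) then (1 : ℝ) else 0) *
    ∏ i : Fin t,
      (M.p (h i.castSucc).1 (h i.castSucc).2 (h i.succ).1 * π (h i.succ).1 (h i.succ).2)

/-- The last state-action pair of a history. -/
def lastSA {t : ℕ} (h : Hist S A t) : S × A := h (Fin.last t)

/-- State-action value `Q^π(s,a) = E_{τ∼π}[∑_{t≥0} γ^t r(s_t,a_t) | s₀=s, a₀=a]`. -/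
noncomputable def Qval (M : MDP S A) (π : S → A → ℝ) (s : S) (a : A) : ℝ :=
  ∑' t : ℕ, M.γ ^ t * ∑ h : Hist S A t, probFrom M π s a t h * M.r (lastSA h).1 (lastSA h).2

/-- State value `V^π(s)`. -/
noncomputable def Vval (M : MDP S A) (π : S → A → ℝ) (s : S) : ℝ :=
  ∑ a, π s a * Qval M π s a

/-- Advantage `A^π(s,a) = Q^π(s,a) - V^π(s)`. -/
noncomputable def Adv (M : MDP S A) (π : S → A → ℝ) (s : S) (a : A) : ℝ :=
  Qval M π s a - Vval M π s

/-- The value `η(π) = E_{τ∼π} ∑_{t≥0} γ^t r(s_t,a_t)`. -/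
noncomputable def ηval (M : MDP S A) (π : S → A → ℝ) : ℝ :=
  ∑' t : ℕ, M.γ ^ t * ∑ h : Hist S A t, prob M π t h * M.r (lastSA h).1 (lastSA h).2

/-- Normalised discounted state occupancy measure
`d^π(s) = (1-γ) ∑_{t≥0} γ^t Pr_{τ∼π}(s_t = s)`. -/
noncomputable def dOcc (M : MDP S A) (π : S → A → ℝ) (s : S) : ℝ :=
  (1 - M.γ) * ∑' t : ℕ, M.γ ^ t *
    ∑ h : Hist S A t, prob M π t h * (if (lastSA h).1 = s then (1 : ℝ) else 0)

/-- The surrogate objective `L_π(π') = (1/(1-γ)) ∑_s d^π(s) ∑_a π'(a|s) A^π(s,a)`. -/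
noncomputable def Lsur (M : MDP S A) (π π' : S → A → ℝ) : ℝ :=
  (1 - M.γ)⁻¹ * ∑ s, dOcc M π s * ∑ a, π' s a * Adv M π s a

/-- Product of importance sampling ratios `ρ_{0:t}` along a history. -/
noncomputable def ρprod (π π' : S → A → ℝ) {t : ℕ} (h : Hist S A t) : ℝ :=
  ∏ i, π' (h i).1 (h i).2 / π (h i).1 (h i).2

/-- Smoothed product of importance sampling ratios `ρ^{α}_{0:t}`. -/
noncomputable def ρpow (π π' : S → A → ℝ) {t : ℕ} (α : Fin (t + 1) → ℝ) (h : Hist S A t) : ℝ :=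
  ∏ i, (π' (h i).1 (h i).2 / π (h i).1 (h i).2) ^ (α i)

/-- The prefix of length `t+1` of a history of length `T+1` (for `t ≤ T`). -/
def pref {T : ℕ} (h : Hist S A T) (t : Fin (T + 1)) : Hist S A (t : ℕ) :=
  fun i => h (Fin.castLE t.isLt i)


/-- Weight of a history with initial weight `w`. -/
noncomputable def wt (M : MDP S A) (π : S → A → ℝ) (w : S × A → ℝ) (t : ℕ) (h : Hist S A t) : ℝ :=
  w (h 0) *
    ∏ i : Fin t,
      (M.p (h i.castSucc).1 (h i.castSucc).2 (h i.succ).1 * π (h i.succ).1 (h i.succ).2)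

/-- Weighted expectation of `F` at time `t`. -/
noncomputable def Ew (M : MDP S A) (π : S → A → ℝ) (w : S × A → ℝ) (t : ℕ) (F : S × A → ℝ) : ℝ :=
  ∑ h : Hist S A t, wt M π w t h * F (lastSA h)

/-- Transition operator. -/
noncomputable def Top (M : MDP S A) (π : S → A → ℝ) (F : S × A → ℝ) : S × A → ℝ :=
  fun x => ∑ s', M.p x.1 x.2 s' * ∑ a', π s' a' * F (s', a')

/-- Initial weight. -/
def w0 (M : MDP S A) (π : S → A → ℝ) : S × A → ℝ := fun x => M.μ0 x.1 * π x.1 x.2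

/-- Point mass. -/
noncomputable def wpt (x : S × A) : S × A → ℝ := fun y => if y = x then 1 else 0

lemma Ew_zero (M : MDP S A) (π : S → A → ℝ) (w : S × A → ℝ) (F : S × A → ℝ) :
    Ew M π w 0 F = ∑ x, w x * F x := by
  unfold Ew wt lastSA
  rw [← (Equiv.funUnique (Fin 1) (S × A)).symm.sum_comp]
  simp

lemma Ew_succ (M : MDP S A) (π : S → A → ℝ) (w : S × A → ℝ) (t : ℕ) (F : S × A → ℝ) :
    Ew M π w (t + 1) F = Ew M π w t (Top M π F) := by
  unfold Ew Top
  rw [← (Fin.snocEquiv (fun _ : Fin (t + 2) => S × A)).sum_comp, Fintype.sum_prod_type_right]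
  refine Finset.sum_congr rfl fun h _ => ?_
  rw [Fintype.sum_prod_type, Finset.mul_sum]
  refine Finset.sum_congr rfl fun s _ => ?_
  rw [Finset.mul_sum, Finset.mul_sum]
  refine Finset.sum_congr rfl fun a _ => ?_
  have h0 : (Fin.snoc h (s, a) : Hist S A (t + 1)) 0 = h 0 := by
    have := Fin.snoc_castSucc (α := fun _ : Fin (t + 2) => S × A) (s, a) h 0
    simpa using this
  have hc : ∀ i : Fin (t+1), (Fin.snoc h (s, a) : Hist S A (t + 1)) i.castSucc = h i := fun i =>
    Fin.snoc_castSucc (α := fun _ : Fin (t + 2) => S × A) (s, a) h i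
  have hl : (Fin.snoc h (s, a) : Hist S A (t + 1)) (Fin.last (t+1)) = (s, a) :=
    Fin.snoc_last (α := fun _ : Fin (t + 2) => S × A) (s, a) h
  have e : (Fin.snocEquiv (fun _ : Fin (t + 2) => S × A)) ((s, a), h)
      = (Fin.snoc h (s, a) : Hist S A (t + 1)) := rfl
  rw [e]
  unfold wt lastSA
  rw [Fin.prod_univ_castSucc, h0, hl]
  simp only [← Fin.castSucc_succ, hc, Fin.succ_last, hl]
  ring

lemma Ew_add (M : MDP S A) (π : S → A → ℝ) (w : S × A → ℝ) (t : ℕ) (F G : S × A → ℝ) :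
    Ew M π w t (fun x => F x + G x) = Ew M π w t F + Ew M π w t G := by
  simp [Ew, mul_add, Finset.sum_add_distrib]

lemma Ew_sub (M : MDP S A) (π : S → A → ℝ) (w : S × A → ℝ) (t : ℕ) (F G : S × A → ℝ) :
    Ew M π w t (fun x => F x - G x) = Ew M π w t F - Ew M π w t G := by
  simp [Ew, mul_sub, Finset.sum_sub_distrib]

lemma Ew_smul (M : MDP S A) (π : S → A → ℝ) (w : S × A → ℝ) (t : ℕ) (c : ℝ) (F : S × A → ℝ) :
    Ew M π w t (fun x => c * F x) = c * Ew M π w t F := by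
  simp only [Ew, Finset.mul_sum]
  refine Finset.sum_congr rfl fun h _ => by ring

lemma abs_avg_le {ι : Type*} [Fintype ι] (q : ι → ℝ) (hq : ∀ i, 0 ≤ q i) (h1 : ∑ i, q i = 1)
    (f : ι → ℝ) (C : ℝ) (hf : ∀ i, |f i| ≤ C) : |∑ i, q i * f i| ≤ C := by
  calc |∑ i, q i * f i| ≤ ∑ i, |q i * f i| := Finset.abs_sum_le_sum_abs _ _
    _ ≤ ∑ i, q i * C := Finset.sum_le_sum fun i _ => by
        rw [abs_mul, abs_of_nonneg (hq i)]; exact mul_le_mul_of_nonneg_left (hf i) (hq i)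
    _ = C := by rw [← Finset.sum_mul, h1, one_mul]

lemma Top_bound (M : MDP S A) {π : S → A → ℝ} (hπ : IsPolicy π) (F : S × A → ℝ) (C : ℝ)
    (hF : ∀ x, |F x| ≤ C) (x : S × A) : |Top M π F x| ≤ C :=
  abs_avg_le _ (M.p_nonneg _ _) (M.p_sum_one _ _) _ _ fun s' =>
    abs_avg_le _ (hπ.1 s') (hπ.2 s') _ _ fun _ => hF _

lemma Ew_bound (M : MDP S A) {π : S → A → ℝ} (hπ : IsPolicy π) (w : S × A → ℝ)
    (hw : ∀ x, 0 ≤ w x) (hw1 : ∑ x, w x = 1) (t : ℕ) :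
    ∀ (F : S × A → ℝ) (C : ℝ), (∀ x, |F x| ≤ C) → |Ew M π w t F| ≤ C := by
  induction t with
  | zero => intro F C hF; rw [Ew_zero]; exact abs_avg_le w hw hw1 F C hF
  | succ t ih => intro F C hF; rw [Ew_succ]; exact ih _ C (Top_bound M hπ F C hF)

lemma Ew_summable (M : MDP S A) {π : S → A → ℝ} (hπ : IsPolicy π) (w : S × A → ℝ)
    (hw : ∀ x, 0 ≤ w x) (hw1 : ∑ x, w x = 1) (F : S × A → ℝ) :
    Summable fun t => M.γ ^ t * Ew M π w t F := by
  have hC : ∀ x, |F x| ≤ ∑ y, |F y| := fun x =>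
    Finset.single_le_sum (f := fun y => |F y|) (fun _ _ => abs_nonneg _) (Finset.mem_univ x)
  refine Summable.of_norm_bounded
    ((summable_geometric_of_lt_one M.γ_pos.le M.γ_lt_one).mul_right (∑ y, |F y|)) fun t => ?_
  rw [norm_mul, Real.norm_eq_abs, Real.norm_eq_abs, abs_of_nonneg (pow_nonneg M.γ_pos.le t)]
  exact mul_le_mul_of_nonneg_left (Ew_bound M hπ w hw hw1 t F _ hC) (pow_nonneg M.γ_pos.le t)

lemma w0_nonneg (M : MDP S A) {π : S → A → ℝ} (hπ : IsPolicy π) (x : S × A) : 0 ≤ w0 M π x :=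
  mul_nonneg (M.μ0_nonneg _) (hπ.1 _ _)

lemma w0_sum (M : MDP S A) {π : S → A → ℝ} (hπ : IsPolicy π) : ∑ x, w0 M π x = 1 := by
  simp [w0, Fintype.sum_prod_type, ← Finset.mul_sum, hπ.2, M.μ0_sum_one]

lemma wpt_nonneg (x y : S × A) : 0 ≤ wpt x y := by unfold wpt; split_ifs <;> norm_num

lemma wpt_sum (x : S × A) : ∑ y, wpt x y = 1 := by simp [wpt]

/-- Decomposition: the weighted expectation is linear in the initial weight. -/
lemma Ew_lin (M : MDP S A) (π : S → A → ℝ) (w : S × A → ℝ) (t : ℕ) :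
    ∀ F, Ew M π w t F = ∑ x, w x * Ew M π (wpt x) t F := by
  induction t with
  | zero => intro F; simp [Ew_zero, wpt]
  | succ t ih => intro F; simp only [Ew_succ]; exact ih _

lemma Ew_pt_succ (M : MDP S A) (π : S → A → ℝ) (t : ℕ) :
    ∀ (F : S × A → ℝ) (x : S × A), Ew M π (wpt x) (t + 1) F =
      Top M π (fun y => Ew M π (wpt y) t F) x := by
  induction t with
  | zero => intro F x; rw [Ew_succ]; simp [Ew_zero, wpt]
  | succ t ih => intro F x; rw [Ew_succ, ih]; simp only [← Ew_succ]

/-- The reward on pairs. -/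
def rewPair (M : MDP S A) : S × A → ℝ := fun x => M.r x.1 x.2

/-- The action value on pairs. -/
noncomputable def Qp (M : MDP S A) (π : S → A → ℝ) : S × A → ℝ := fun x => Qval M π x.1 x.2

lemma Qp_eq (M : MDP S A) (π : S → A → ℝ) (x : S × A) :
    Qp M π x = ∑' t, M.γ ^ t * Ew M π (wpt x) t (rewPair M) := rfl

lemma eta_eq (M : MDP S A) (π : S → A → ℝ) :
    ηval M π = ∑' t, M.γ ^ t * Ew M π (w0 M π) t (rewPair M) := rfl

lemma tsum_lin {ι : Type*} [Fintype ι] (c : ι → ℝ) (f : ι → ℕ → ℝ) (hf : ∀ i, Summable (f i)) :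
    ∑' t, ∑ i, c i * f i t = ∑ i, c i * ∑' t, f i t := by
  rw [Summable.tsum_finsetSum fun i _ => (hf i).mul_left (c i)]
  simp only [tsum_mul_left]

lemma eta_eq_Q (M : MDP S A) {π : S → A → ℝ} (hπ : IsPolicy π) :
    ηval M π = ∑ x, w0 M π x * Qp M π x := by
  simp only [eta_eq, Qp_eq]
  rw [← tsum_lin _ _ fun x => Ew_summable M hπ _ (wpt_nonneg x) (wpt_sum x) (rewPair M)]
  refine tsum_congr fun t => ?_
  rw [Ew_lin, Finset.mul_sum]
  exact Finset.sum_congr rfl fun _ _ => by ring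

lemma bellman (M : MDP S A) {π : S → A → ℝ} (hπ : IsPolicy π) (x : S × A) :
    Qp M π x = rewPair M x + M.γ * Top M π (Qp M π) x := by
  have hs := fun y => Ew_summable M hπ _ (wpt_nonneg y) (wpt_sum y) (rewPair M)
  have e : ∀ F : S × A → ℝ, Top M π F x = ∑ y : S × A, (M.p x.1 x.2 y.1 * π y.1 y.2) * F y := by
    intro F
    simp only [Top, Fintype.sum_prod_type, Finset.mul_sum, mul_assoc]
  rw [Qp_eq, (hs x).tsum_eq_zero_add, e]
  simp only [Qp_eq]
  rw [← tsum_lin _ _ hs, ← tsum_mul_left]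
  congr 1
  · simp [Ew_zero, wpt]
  · refine tsum_congr fun t => ?_
    rw [Ew_pt_succ, e, Finset.mul_sum, Finset.mul_sum]
    exact Finset.sum_congr rfl fun _ _ => by ring

lemma Ew_cond (M : MDP S A) {π : S → A → ℝ} (hπ : IsPolicy π) (t : ℕ) (F : S × A → ℝ) :
    Ew M π (w0 M π) t F = Ew M π (w0 M π) t (fun x => ∑ a, π x.1 a * F (x.1, a)) := by
  cases t with
  | zero =>
    rw [Ew_zero, Ew_zero, Fintype.sum_prod_type, Fintype.sum_prod_type]
    refine Finset.sum_congr rfl fun s _ => ?_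
    simp only [w0]
    rw [← Finset.sum_mul, ← Finset.mul_sum, hπ.2, mul_one, Finset.mul_sum]
    exact Finset.sum_congr rfl fun _ _ => by ring
  | succ t =>
    rw [Ew_succ, Ew_succ]
    congr 1
    funext x
    unfold Top
    refine Finset.sum_congr rfl fun s _ => ?_
    simp only
    rw [← Finset.sum_mul, hπ.2, one_mul]

/-- Discounted unnormalised occupancy. -/
noncomputable def D (M : MDP S A) (π : S → A → ℝ) (s : S) : ℝ :=
  ∑' t, M.γ ^ t * Ew M π (w0 M π) t (fun x => if x.1 = s then 1 else 0)

lemma dOcc_eq (M : MDP S A) (π : S → A → ℝ) (s : S) :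
    dOcc M π s = (1 - M.γ) * D M π s := rfl

lemma D_sum (M : MDP S A) {π : S → A → ℝ} (hπ : IsPolicy π) (g : S → ℝ) :
    ∑ s, D M π s * g s = ∑' t, M.γ ^ t * Ew M π (w0 M π) t (fun x => g x.1) := by
  simp only [D, mul_comm _ (g _)]
  rw [← tsum_lin _ _ fun s => Ew_summable M hπ _ (w0_nonneg M hπ) (w0_sum M hπ) _]
  refine tsum_congr fun t => ?_
  simp only [Ew, Finset.mul_sum]
  rw [Finset.sum_comm]
  refine Finset.sum_congr rfl fun h _ => ?_
  simp
  ring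

/-- Performance difference lemma. -/
lemma perf_diff (M : MDP S A) {π π' : S → A → ℝ} (hπ : IsPolicy π) (hπ' : IsPolicy π') :
    ηval M π' = ηval M π + ∑ s, D M π' s * ∑ a, (π' s a - π s a) * Qval M π s a := by
  set V : S → ℝ := fun s => ∑ a, π s a * Qval M π s a with hV
  set E := fun t F => Ew M π' (w0 M π') t F with hE
  have hsum : ∀ F, Summable fun t => M.γ ^ t * E t F := fun F =>
    Ew_summable M hπ' _ (w0_nonneg M hπ') (w0_sum M hπ') F
  have hTV : Top M π' (fun x => V x.1) = Top M π (Qp M π) := by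
    funext x
    unfold Top
    refine Finset.sum_congr rfl fun s _ => ?_
    simp only
    rw [← Finset.sum_mul, hπ'.2, one_mul]
    rfl
  have key : ∀ t, M.γ ^ t * E t (fun x => ∑ a, (π' x.1 a - π x.1 a) * Qval M π x.1 a)
      = M.γ ^ t * E t (rewPair M) + M.γ ^ (t + 1) * E (t + 1) (fun x => V x.1)
        - M.γ ^ t * E t (fun x => V x.1) := by
    intro t
    have h1 : E t (fun x => ∑ a, (π' x.1 a - π x.1 a) * Qval M π x.1 a)
        = E t (Qp M π) - E t (fun x => V x.1) := by
      simp only [hE]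
      rw [Ew_cond M hπ' t (Qp M π), ← Ew_sub]
      congr 1
      funext x
      simp only [hV, sub_mul, Finset.sum_sub_distrib, Qp]
    have h2 : E t (Qp M π) = E t (rewPair M) + M.γ * E (t + 1) (fun x => V x.1) := by
      simp only [hE]
      rw [Ew_succ, hTV, ← Ew_smul, ← Ew_add]
      congr 1
      funext x
      exact bellman M hπ x
    rw [h1, h2]
    ring
  have hη : ηval M π = E 0 (fun x => V x.1) := by
    rw [eta_eq_Q M hπ]
    simp only [hE]
    rw [Ew_zero, Fintype.sum_prod_type, Fintype.sum_prod_type]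
    refine Finset.sum_congr rfl fun s _ => ?_
    simp only [w0, Qp, hV]
    rw [← Finset.sum_mul, ← Finset.mul_sum, hπ'.2, mul_one, Finset.mul_sum]
    exact Finset.sum_congr rfl fun _ _ => by ring
  rw [D_sum M hπ']
  rw [tsum_congr key]
  have hs1 := (summable_nat_add_iff 1).2 (hsum (fun x => V x.1))
  rw [((hsum _).add hs1).tsum_sub (hsum _), (hsum _).tsum_add hs1,
    (hsum (fun x => V x.1)).tsum_eq_zero_add, hη, eta_eq]
  simp only [pow_zero, one_mul]
  ring

lemma D_cont {X : Type*} [TopologicalSpace X] (M : MDP S A) (πθ : X → S → A → ℝ)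
    (hpol : ∀ θ, IsPolicy (πθ θ)) (θ₀ : X)
    (hc : ∀ s a, ContinuousAt (fun θ => πθ θ s a) θ₀) (s : S) :
    ContinuousAt (fun θ => D M (πθ θ) s) θ₀ := by
  unfold D
  refine tendsto_tsum_of_dominated_convergence
    (summable_geometric_of_lt_one M.γ_pos.le M.γ_lt_one) (fun t => ?_)
    (Filter.Eventually.of_forall fun θ t => ?_)
  · unfold Ew wt w0
    refine Filter.Tendsto.mul tendsto_const_nhds (tendsto_finsetSum _ fun h _ => ?_)
    refine Filter.Tendsto.mul (Filter.Tendsto.mul (Filter.Tendsto.mul tendsto_const_nhds (hc _ _))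
      (tendsto_finsetProd _ fun i _ => ?_)) tendsto_const_nhds
    exact Filter.Tendsto.mul tendsto_const_nhds (hc _ _)
  · rw [norm_mul, Real.norm_eq_abs, Real.norm_eq_abs, abs_of_nonneg (pow_nonneg M.γ_pos.le t)]
    refine mul_le_of_le_one_right (pow_nonneg M.γ_pos.le t)
      (Ew_bound M (hpol θ) _ (w0_nonneg M (hpol θ)) (w0_sum M (hpol θ)) t _ 1 fun x => ?_)
    split_ifs <;> simp

lemma hasFDerivAt_mul_of_zero {X : Type*} [NormedAddCommGroup X] [NormedSpace ℝ X]
    (c g : X → ℝ) (g' : X →L[ℝ] ℝ) (x : X) (hc : ContinuousAt c x) (hg : HasFDerivAt g g' x)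
    (h0 : g x = 0) : HasFDerivAt (fun y => c y * g y) (c x • g') x := by
  have h1 : HasFDerivAt (fun y => c x * g y) (c x • g') x := hg.const_mul (c x)
  have h2 : HasFDerivAt (fun y => (c y - c x) * g y) (0 : X →L[ℝ] ℝ) x := by
    rw [hasFDerivAt_iff_isLittleO]
    have hb := hg.isBigO_sub
    have ho : (fun y => c y - c x) =o[nhds x] (fun _ => (1 : ℝ)) := by
      rw [Asymptotics.isLittleO_one_iff]
      simpa using hc.tendsto.sub_const (c x)
    have h3 := ho.mul_isBigO hb.norm_right
    simp only [one_mul] at h3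
    have h4 := h3.of_norm_right
    simpa [h0] using h4
  have := h1.add h2
  rw [add_zero] at this
  refine this.congr_of_eventuallyEq (Filter.Eventually.of_forall fun y => ?_)
  simp only [Pi.add_apply]
  ring

/-- The (discounted) policy gradient theorem:
`∇η(π_θ)|_{θ₀} = (1/(1−γ)) ∑_s d^{π_{θ₀}}(s) ∑_a π_{θ₀}(a|s) ∇log π_θ(a|s)|_{θ₀} Q^{π_{θ₀}}(s,a)`. -/
theorem policy_gradient_theorem
    (d : ℕ) (M : MDP S A)
    (πθ : EuclideanSpace ℝ (Fin d) → S → A → ℝ)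
    (hpol : ∀ θ, IsPolicy (πθ θ))
    (θ₀ : EuclideanSpace ℝ (Fin d))
    (hpos : ∀ s a, 0 < πθ θ₀ s a)
    (gπ : S → A → EuclideanSpace ℝ (Fin d))
    (hdiff : ∀ s a, HasGradientAt (fun θ => πθ θ s a) (gπ s a) θ₀) :
    HasGradientAt (fun θ => ηval M (πθ θ))
      ((1 - M.γ)⁻¹ •
        ∑ s, dOcc M (πθ θ₀) s •
          ∑ a, (πθ θ₀ s a * Qval M (πθ θ₀) s a) • ((πθ θ₀ s a)⁻¹ • gπ s a)) θ₀ := by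
  have hcont : ∀ s a, ContinuousAt (fun θ => πθ θ s a) θ₀ := fun s a =>
    (hdiff s a).hasFDerivAt.continuousAt
  have hD := D_cont M πθ hpol θ₀ hcont
  have hfun : (fun θ => ηval M (πθ θ)) = fun θ => ηval M (πθ θ₀) +
      ∑ s, D M (πθ θ) s * ∑ a, (πθ θ s a - πθ θ₀ s a) * Qval M (πθ θ₀) s a :=
    funext fun θ => perf_diff M (hpol θ₀) (hpol θ)
  rw [hfun, hasGradientAt_iff_hasFDerivAt]
  have hγ : (1 - M.γ) ≠ 0 := by have := M.γ_lt_one; linarith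
  have hin : ∀ s, HasFDerivAt
      (fun θ => ∑ a, (πθ θ s a - πθ θ₀ s a) * Qval M (πθ θ₀) s a)
      (∑ a, Qval M (πθ θ₀) s a • InnerProductSpace.toDual ℝ _ (gπ s a)) θ₀ := fun s =>
    HasFDerivAt.fun_sum fun a _ =>
      ((hdiff s a).hasFDerivAt.sub_const (πθ θ₀ s a)).mul_const (Qval M (πθ θ₀) s a)
  have hall := (HasFDerivAt.fun_sum (u := Finset.univ) fun s _ =>
    hasFDerivAt_mul_of_zero _ _ _ θ₀ (hD s) (hin s) (by simp)).const_add (ηval M (πθ θ₀))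
  refine hall.congr_fderiv ?_
  have e1 : ∀ s a, (πθ θ₀ s a * Qval M (πθ θ₀) s a) • ((πθ θ₀ s a)⁻¹ • gπ s a)
      = Qval M (πθ θ₀) s a • gπ s a := by
    intro s a
    rw [smul_smul]
    congr 1
    have := (hpos s a).ne'
    field_simp
  simp only [e1, dOcc_eq, Finset.smul_sum, smul_smul, map_sum]
  refine Finset.sum_congr rfl fun s _ => Finset.sum_congr rfl fun a _ => ?_
  rw [LinearIsometryEquiv.map_smulₛₗ]
  simp only [conj_trivial]
  congr 1
  field_simp

end PolicyOpt
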